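/- Let Φ : X → (ℂⁿ →L[ℂ] H) be a continuous frame for a continuous family of rank-n orthogonal projections P (i.e. Φ*Φ = Id, ΦΦ* = P) on a compact manifold X, and let Φ_δ be any smooth map uniformly close to Φ. Then for Φ_δ sufficiently close in the uniform norm, the matrix G(x) := Φ_δ(x)* P(x) Φ_δ(x) is invertible for all x, and Φ̂(x) := P(x) Φ_δ(x) G(x)^{−1/2} is a smooth frame for P: Φ̂*Φ̂ = Id and Φ̂ Φ̂* = P. -/

import Mathlib

set_option maxHeartbeats 1000000
set_option synthInstance.maxHeartbeats 400000

open ContinuousLinearMap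

open Filter Topology in
/-- The square root is smooth along a smooth family of nonnegative elements, at an invertible one. -/
theorem sqrt_comp_contDiffAt {E A : Type*} [NormedAddCommGroup E] [NormedSpace ℝ E]
    [CStarAlgebra A] [PartialOrder A] [StarOrderedRing A] [FiniteDimensional ℂ A]
    (G : E → A) (hG : ContDiff ℝ (⊤ : ℕ∞) G) (hpos : ∀ x, 0 ≤ G x) (x : E) (hu : IsUnit (G x)) :
    ContDiffAt ℝ (⊤ : ℕ∞) (fun y => CFC.sqrt (G y)) x := by
  set a : A := CFC.sqrt (G x) with ha
  have ha0 : 0 ≤ a := CFC.sqrt_nonneg _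
  have hau : IsUnit a := (CFC.isUnit_sqrt_iff _ (hpos x)).2 hu
  have haa : a * a = G x := CFC.sqrt_mul_sqrt_self _ (hpos x)
  set f : A → A := fun y => y * y with hf
  have hfc : ContDiff ℂ (⊤ : ℕ∞) f := contDiff_id.mul contDiff_id
  set L : A →L[ℂ] A := ContinuousLinearMap.mul ℂ A a + (ContinuousLinearMap.mul ℂ A).flip a with hL
  have hLap : ∀ h, L h = a * h + h * a := fun h => by simp [hL]
  have hinj : Function.Injective L := by
    rw [injective_iff_map_eq_zero]
    intro h hh
    rw [hLap] at hh
    have h1 : a * h = -(h * a) := eq_neg_of_add_eq_zero_left hh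
    have h2 : Commute (G x) h := by
      change G x * h = h * G x
      rw [← haa, mul_assoc, h1, mul_neg, ← mul_assoc, h1, neg_mul, neg_neg, mul_assoc]
    have h3 : Commute a h := by
      exact h2.cfcₙ_nnreal _
    have h4 : a * h = 0 := by
      have h5 : a * h = h * a := h3
      have h6 : a * h = -(a * h) := by rw [h5, ← h1, h5]
      have h7 : (2 : ℂ) • (a * h) = 0 := by
        rw [two_smul]
        exact eq_neg_iff_add_eq_zero.1 h6
      exact (smul_eq_zero.1 h7).resolve_left two_ne_zero
    exact hau.mul_right_eq_zero.1 h4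
  let e : A ≃L[ℂ] A := (LinearEquiv.ofInjectiveEndo (L : A →ₗ[ℂ] A) hinj).toContinuousLinearEquiv
  have he : (e : A →L[ℂ] A) = L := by ext h; rfl
  have hder : HasFDerivAt f (e : A →L[ℂ] A) a := by
    rw [he]
    have := (hasFDerivAt_id (𝕜 := ℂ) a).mul' (hasFDerivAt_id (𝕜 := ℂ) a)
    refine this.congr_fderiv ?_
    ext h
    simp [hLap]
  have hfa : ContDiffAt ℂ (⊤ : ℕ∞) f a := hfc.contDiffAt
  have hn : ((⊤ : ℕ∞) : WithTop ℕ∞) ≠ 0 := by simp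
  have hg := (hfa.to_localInverse hder hn).restrict_scalars ℝ
  have hleft : ∀ᶠ y in 𝓝 a, hfa.localInverse hder hn (f y) = y :=
    (hfa.hasStrictFDerivAt' hder hn).eventually_left_inverse
  have hcont : Tendsto (fun y => CFC.sqrt (G y)) (𝓝 x) (𝓝 a) :=
    (CFC.continuousOn_sqrt.comp_continuous hG.continuous hpos).tendsto x
  have hfx : f a = G x := haa
  rw [hfx] at hg
  refine (hg.comp x hG.contDiffAt).congr_of_eventuallyEq ?_
  filter_upwards [hcont.eventually hleft] with y hy
  have : f (CFC.sqrt (G y)) = G y := CFC.sqrt_mul_sqrt_self _ (hpos y)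
  rw [this] at hy
  exact hy.symm

/-- Real smoothness of the composition of complex-linear maps. -/
theorem contDiff_comp_clm {E V W Z : Type*} [NormedAddCommGroup E] [NormedSpace ℝ E]
    [NormedAddCommGroup V] [InnerProductSpace ℂ V]
    [NormedAddCommGroup W] [InnerProductSpace ℂ W]
    [NormedAddCommGroup Z] [InnerProductSpace ℂ Z]
    {f : E → (W →L[ℂ] Z)} {g : E → (V →L[ℂ] W)} {x : E}
    (hf : ContDiffAt ℝ (⊤ : ℕ∞) f x) (hg : ContDiffAt ℝ (⊤ : ℕ∞) g x) :
    ContDiffAt ℝ (⊤ : ℕ∞) (fun y => f y ∘L g y) x := by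
  have h : ContDiff ℝ (⊤ : ℕ∞) (fun p : (W →L[ℂ] Z) × (V →L[ℂ] W) => p.1 ∘L p.2) :=
    (isBoundedBilinearMap_comp (𝕜 := ℂ)).contDiff.restrict_scalars ℝ
  exact h.contDiffAt.comp x (hf.prodMk hg)

/-- Real smoothness of the adjoint. -/
theorem contDiff_adjoint_clm {E V W : Type*} [NormedAddCommGroup E] [NormedSpace ℝ E]
    [NormedAddCommGroup V] [InnerProductSpace ℂ V] [CompleteSpace V]
    [NormedAddCommGroup W] [InnerProductSpace ℂ W] [CompleteSpace W]
    {f : E → (V →L[ℂ] W)} {x : E}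
    (hf : ContDiffAt ℝ (⊤ : ℕ∞) f x) :
    ContDiffAt ℝ (⊤ : ℕ∞) (fun y => ContinuousLinearMap.adjoint (f y)) x := by
  let L : (V →L[ℂ] W) →+ (W →L[ℂ] V) :=
    { toFun := fun T => ContinuousLinearMap.adjoint T
      map_zero' := map_zero _
      map_add' := map_add _ }
  have hc : Continuous L := (ContinuousLinearMap.adjoint (𝕜 := ℂ) (E := V) (F := W)).continuous
  exact (L.toRealLinearMap hc).contDiff.contDiffAt.comp x hf

/-- Algebraic facts about the inverse square root of `T* T`, for `T` invertible. -/
theorem inverse_sqrt_facts {A : Type*} [CStarAlgebra A] [PartialOrder A] [StarOrderedRing A]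
    (T G : A) (hT : IsUnit T) (hG : star T * T = G) :
    0 ≤ G ∧ IsUnit G ∧ IsUnit (CFC.sqrt G) ∧
      star (Ring.inverse (CFC.sqrt G)) = Ring.inverse (CFC.sqrt G) ∧
      Ring.inverse (CFC.sqrt G) * G * Ring.inverse (CFC.sqrt G) = 1 ∧
      T * (Ring.inverse (CFC.sqrt G) * Ring.inverse (CFC.sqrt G)) * star T = 1 := by
  have h0 : 0 ≤ G := hG ▸ star_mul_self_nonneg T
  have hu : IsUnit G := hG ▸ hT.star.mul hT
  have hsu : IsUnit (CFC.sqrt G) := (CFC.isUnit_sqrt_iff _ h0).2 hu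
  have hss : CFC.sqrt G * CFC.sqrt G = G := CFC.sqrt_mul_sqrt_self _ h0
  have hsa : star (CFC.sqrt G) = CFC.sqrt G := (CFC.sqrt_nonneg G).isSelfAdjoint
  set s := CFC.sqrt G
  set r := Ring.inverse s
  have hrs : r * s = 1 := Ring.inverse_mul_cancel _ hsu
  have hsr : s * r = 1 := Ring.mul_inverse_cancel _ hsu
  have h1 : r * G * r = 1 := by
    rw [← hss, ← mul_assoc, hrs, one_mul, hsr]
  have h2 : r * r * G = 1 := by
    rw [← hss, mul_assoc, ← mul_assoc r s s, hrs, one_mul, hrs]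
  refine ⟨h0, hu, hsu, ?_, h1, ?_⟩
  · have : star r * s = 1 := by
      have := congrArg star hsr
      rwa [star_mul, hsa, star_one] at this
    calc star r = star r * (s * r) := by rw [hsr, mul_one]
      _ = r := by rw [← mul_assoc, this, one_mul]
  · have h3 : (r * r * star T) * T = 1 := by rw [mul_assoc, hG, h2]
    have h4 : T * (r * r * star T) = 1 := by
      apply hT.mul_right_cancel
      rw [mul_assoc, h3, mul_one, one_mul]
    rw [mul_assoc, h4]

/-- Let `Φ` be a continuous frame for a smooth family of rank-`n`
orthogonal projections `P` on a compact set `K`. Then for any smooth `Φδ` sufficiently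
uniformly close to `Φ` on `K`, the matrix `G(x) = Φδ(x)* P(x) Φδ(x)` is invertible on `K`
and `Φ̂(x) = P(x) Φδ(x) G(x)^{−1/2}` is a smooth frame for `P`:
`Φ̂*Φ̂ = 1` and `Φ̂Φ̂* = P`. -/
theorem smoothing_a_continuous_frame
    {E : Type*} [NormedAddCommGroup E] [NormedSpace ℝ E]
    {H : Type*} [NormedAddCommGroup H] [InnerProductSpace ℂ H] [FiniteDimensional ℂ H]
    {n : ℕ} (K : Set E) (hK : IsCompact K)
    (P : E → (H →L[ℂ] H)) (hP : ContDiff ℝ (⊤ : ℕ∞) P)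
    (hproj : ∀ x, (P x) ∘L (P x) = P x)
    (hsa : ∀ x, ContinuousLinearMap.adjoint (P x) = P x)
    (Φ : E → (EuclideanSpace ℂ (Fin n) →L[ℂ] H)) (hΦ : Continuous Φ)
    (hΦiso : ∀ x, (ContinuousLinearMap.adjoint (Φ x)) ∘L Φ x = ContinuousLinearMap.id ℂ _)
    (hΦP : ∀ x, Φ x ∘L (ContinuousLinearMap.adjoint (Φ x)) = P x) :
    ∃ ε > (0:ℝ), ∀ Φδ : E → (EuclideanSpace ℂ (Fin n) →L[ℂ] H),
      ContDiff ℝ (⊤ : ℕ∞) Φδ → (∀ x ∈ K, ‖Φδ x - Φ x‖ ≤ ε) →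
      (∀ x ∈ K, IsUnit
          ((ContinuousLinearMap.adjoint (Φδ x)) ∘L (P x) ∘L Φδ x)) ∧
      ContDiffOn ℝ (⊤ : ℕ∞)
        (fun x => ((P x) ∘L Φδ x) ∘L
          Ring.inverse (CFC.sqrt
            ((ContinuousLinearMap.adjoint (Φδ x)) ∘L (P x) ∘L Φδ x))) K ∧
      (∀ x ∈ K,
        (ContinuousLinearMap.adjoint (((P x) ∘L Φδ x) ∘L
            Ring.inverse (CFC.sqrt
              ((ContinuousLinearMap.adjoint (Φδ x)) ∘L (P x) ∘L Φδ x)))) ∘L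
          (((P x) ∘L Φδ x) ∘L
            Ring.inverse (CFC.sqrt
              ((ContinuousLinearMap.adjoint (Φδ x)) ∘L (P x) ∘L Φδ x)))
          = ContinuousLinearMap.id ℂ _) ∧
      (∀ x ∈ K,
        (((P x) ∘L Φδ x) ∘L
            Ring.inverse (CFC.sqrt
              ((ContinuousLinearMap.adjoint (Φδ x)) ∘L (P x) ∘L Φδ x))) ∘L
          (ContinuousLinearMap.adjoint (((P x) ∘L Φδ x) ∘L
            Ring.inverse (CFC.sqrt
              ((ContinuousLinearMap.adjoint (Φδ x)) ∘L (P x) ∘L Φδ x))))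
          = P x) := by
  refine ⟨1 / 2, by norm_num, fun Φδ hΦδ hclose => ?_⟩
  let T : E → (EuclideanSpace ℂ (Fin n) →L[ℂ] EuclideanSpace ℂ (Fin n)) :=
    fun x => ContinuousLinearMap.adjoint (Φ x) ∘L Φδ x
  let G : E → (EuclideanSpace ℂ (Fin n) →L[ℂ] EuclideanSpace ℂ (Fin n)) :=
    fun x => (ContinuousLinearMap.adjoint (Φδ x)) ∘L (P x) ∘L Φδ x
  have hTadj : ∀ x, star (T x) = ContinuousLinearMap.adjoint (Φδ x) ∘L Φ x := by
    intro x
    rw [ContinuousLinearMap.star_eq_adjoint]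
    simp only [T]
    rw [ContinuousLinearMap.adjoint_comp, ContinuousLinearMap.adjoint_adjoint]
  have hTG : ∀ x, star (T x) * T x = G x := by
    intro x
    rw [hTadj]
    simp only [T, G]
    rw [← hΦP x]
    rfl
  have hGpos : ∀ x, 0 ≤ G x := fun x => hTG x ▸ star_mul_self_nonneg (T x)
  have hTu : ∀ x ∈ K, IsUnit (T x) := by
    intro x hx
    have hn1 : ‖Φ x‖ ≤ 1 := by
      have h := ContinuousLinearMap.norm_adjoint_comp_self (Φ x)
      rw [hΦiso x] at h
      have h' : ‖Φ x‖ * ‖Φ x‖ ≤ 1 := h ▸ ContinuousLinearMap.norm_id_le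
      nlinarith [norm_nonneg (Φ x)]
    have hsub : T x = 1 - (- (ContinuousLinearMap.adjoint (Φ x) ∘L (Φδ x - Φ x))) := by
      rw [ContinuousLinearMap.comp_sub, hΦiso x]
      change T x = 1 - (-(T x - 1))
      abel
    rw [hsub]
    apply isUnit_one_sub_of_norm_lt_one
    rw [norm_neg]
    calc ‖ContinuousLinearMap.adjoint (Φ x) ∘L (Φδ x - Φ x)‖
        ≤ ‖ContinuousLinearMap.adjoint (Φ x)‖ * ‖Φδ x - Φ x‖ :=
          ContinuousLinearMap.opNorm_comp_le _ _
      _ ≤ 1 * (1 / 2) := by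
          rw [LinearIsometryEquiv.norm_map]
          exact mul_le_mul hn1 (hclose x hx) (norm_nonneg _) zero_le_one
      _ < 1 := by norm_num
  have hGsm : ContDiff ℝ (⊤ : ℕ∞) G := by
    rw [contDiff_iff_contDiffAt]
    intro x
    exact contDiff_comp_clm (contDiff_adjoint_clm hΦδ.contDiffAt)
      (contDiff_comp_clm hP.contDiffAt hΦδ.contDiffAt)
  have hadj : ∀ x ∈ K, ContinuousLinearMap.adjoint (((P x) ∘L Φδ x) ∘L
        Ring.inverse (CFC.sqrt (G x))) =
      Ring.inverse (CFC.sqrt (G x)) ∘L (ContinuousLinearMap.adjoint (Φδ x) ∘L P x) := by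
    intro x hx
    obtain ⟨-, -, -, h4, -, -⟩ := inverse_sqrt_facts (T x) (G x) (hTu x hx) (hTG x)
    rw [ContinuousLinearMap.star_eq_adjoint] at h4
    rw [ContinuousLinearMap.adjoint_comp, ContinuousLinearMap.adjoint_comp, h4, hsa x]
  refine ⟨fun x hx => ?_, fun x hx => ?_, fun x hx => ?_, fun x hx => ?_⟩
  · exact (inverse_sqrt_facts (T x) (G x) (hTu x hx) (hTG x)).2.1
  · obtain ⟨-, h2, h3, -, -, -⟩ := inverse_sqrt_facts (T x) (G x) (hTu x hx) (hTG x)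
    apply ContDiffAt.contDiffWithinAt
    refine contDiff_comp_clm (contDiff_comp_clm hP.contDiffAt hΦδ.contDiffAt) ?_
    have hs := sqrt_comp_contDiffAt G hGsm hGpos x h2
    obtain ⟨u, hu⟩ := h3
    have hinv := (contDiffAt_ringInverse ℂ (n := ((⊤ : ℕ∞) : WithTop ℕ∞)) u).restrict_scalars ℝ
    rw [hu] at hinv
    exact hinv.comp x hs
  · obtain ⟨-, -, -, -, h5, -⟩ := inverse_sqrt_facts (T x) (G x) (hTu x hx) (hTG x)
    refine (congrArg (fun S => S ∘L (((P x) ∘L Φδ x) ∘L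
        Ring.inverse (CFC.sqrt (G x)))) (hadj x hx)).trans ?_
    refine Eq.trans ?_ h5
    change _ = (Ring.inverse (CFC.sqrt (G x)) ∘L
      ((ContinuousLinearMap.adjoint (Φδ x)) ∘L (P x) ∘L Φδ x)) ∘L Ring.inverse (CFC.sqrt (G x))
    conv_rhs => rw [← hproj x]
    rfl
  · obtain ⟨-, -, -, -, -, h6⟩ := inverse_sqrt_facts (T x) (G x) (hTu x hx) (hTG x)
    refine (congrArg (fun S => (((P x) ∘L Φδ x) ∘L
        Ring.inverse (CFC.sqrt (G x))) ∘L S) (hadj x hx)).trans ?_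
    rw [hTadj] at h6
    have h7 : ((P x ∘L Φδ x) ∘L Ring.inverse (CFC.sqrt (G x))) ∘L
        (Ring.inverse (CFC.sqrt (G x)) ∘L (ContinuousLinearMap.adjoint (Φδ x) ∘L P x)) =
        Φ x ∘L (T x * (Ring.inverse (CFC.sqrt (G x)) * Ring.inverse (CFC.sqrt (G x))) *
          (ContinuousLinearMap.adjoint (Φδ x) ∘L Φ x)) ∘L
          ContinuousLinearMap.adjoint (Φ x) := by
      rw [← hΦP x]
      rfl
    refine h7.trans ?_
    rw [h6]
    exact hΦP x
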